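/- Let d ≥ 1, let M be a measurable space with probability measure Q, and let φ : ℝ^d × M × M → [0,1] be measurable with φ(x,p,q) = φ(−x,q,p). For n ≥ 1 and p,q ∈ M define the self-avoiding-walk kernel d^{[n]}(p,q) := ∫_{(ℝ^d)ⁿ} ∫_{M^{n−1}} ∏_{i=0}^{n−1} φ(x_{i+1}−x_i, p_i, p_{i+1}) · ∏_{(i,j): 1≤i, i+2≤j≤n} (1−φ(x_j−x_i, p_i, p_j)) Q^{n−1}(d(p_1,…,p_{n−1})) dx_1⋯dx_n, where x_0 := 0, p_0 := p, p_n := q (all integrals are Lebesgue integrals of nonnegative functions, valued in [0,∞]). Then for every n ≥ 1 and all p,q ∈ M: d^{[2n]}(p,q) ≤ ∫ d^{[n]}(p,r) d^{[n]}(r,q) Q(dr). -/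

import Mathlib

open MeasureTheory
open scoped ENNReal

/-- The points `x_0 = 0, x_1, …, x_n` (with `n = k+1`) of a walk in `ℝ^d`,
assembled from `y = (x_1, …, x_{k+1})`. -/
noncomputable def pts {d k : ℕ} (y : Fin (k + 1) → (Fin d → ℝ)) :
    Fin (k + 2) → (Fin d → ℝ) :=
  Fin.cons 0 y

/-- The marks `p_0 = p, p_1, …, p_{n-1}, p_n = q` (with `n = k+1`) of a walk,
assembled from `m = (p_1, …, p_k)`. -/
def mks {M : Type*} {k : ℕ} (p q : M) (m : Fin k → M) : Fin (k + 2) → M :=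
  Fin.cons p (Fin.snoc m q)

/-- The product `∏_{i=0}^{n-1} φ(x_{i+1} - x_i, p_i, p_{i+1})` along a walk of length
`n = k+1`. -/
noncomputable def pathProd {d : ℕ} {M : Type*} (φ : (Fin d → ℝ) → M → M → ℝ)
    (k : ℕ) (p q : M) (y : Fin (k + 1) → (Fin d → ℝ)) (m : Fin k → M) : ℝ :=
  ∏ i : Fin (k + 1),
    φ (pts y i.succ - pts y i.castSucc) (mks p q m i.castSucc) (mks p q m i.succ)

/-- The avoidance product `∏_{1 ≤ i, i+2 ≤ j ≤ n} (1 - φ(x_j - x_i, p_i, p_j))` along a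
walk of length `n = k+1`. -/
noncomputable def avoidProd {d : ℕ} {M : Type*} (φ : (Fin d → ℝ) → M → M → ℝ)
    (k : ℕ) (p q : M) (y : Fin (k + 1) → (Fin d → ℝ)) (m : Fin k → M) : ℝ :=
  ∏ i : Fin (k + 2), ∏ j : Fin (k + 2),
    if 1 ≤ (i : ℕ) ∧ (i : ℕ) + 2 ≤ (j : ℕ) then
      1 - φ (pts y j - pts y i) (mks p q m i) (mks p q m j)
    else 1

/-- The self-avoiding-walk kernel `d^{[n]}(p,q)` for `n = k+1`:
`dSAW Q φ k p q = d^{[k+1]}(p,q)`. -/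
noncomputable def dSAW {d : ℕ} {M : Type*} [MeasurableSpace M] (Q : Measure M)
    (φ : (Fin d → ℝ) → M → M → ℝ) (k : ℕ) (p q : M) : ℝ≥0∞ :=
  ∫⁻ y : Fin (k + 1) → (Fin d → ℝ),
    (∫⁻ m : Fin k → M,
      ENNReal.ofReal (pathProd φ k p q y m * avoidProd φ k p q y m)
      ∂(Measure.pi fun _ => Q)) ∂volume


theorem aux_prod_le_one {ι : Type*} (s : Finset ι) (f : ι → ℝ)
    (h : ∀ i, 0 ≤ f i ∧ f i ≤ 1) : ∏ i ∈ s, f i ≤ 1 :=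
  Finset.prod_le_one (fun i _ => (h i).1) (fun i _ => (h i).2)

theorem aux_prod_nonneg {ι : Type*} (s : Finset ι) (f : ι → ℝ)
    (h : ∀ i, 0 ≤ f i ∧ f i ≤ 1) : 0 ≤ ∏ i ∈ s, f i :=
  Finset.prod_nonneg (fun i _ => (h i).1)

theorem aux_avoid (k : ℕ) (f : ℕ → ℕ → ℝ) (h : ∀ i j, 0 ≤ f i j ∧ f i j ≤ 1) :
    (∏ i ∈ Finset.range (2 * k + 1 + 2), ∏ j ∈ Finset.range (2 * k + 1 + 2),
      if 1 ≤ i ∧ i + 2 ≤ j then f i j else 1) ≤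
    (∏ i ∈ Finset.range (k + 2), ∏ j ∈ Finset.range (k + 2),
      if 1 ≤ i ∧ i + 2 ≤ j then f i j else 1) *
    (∏ i ∈ Finset.range (k + 2), ∏ j ∈ Finset.range (k + 2),
      if 1 ≤ i ∧ i + 2 ≤ j then f (k + 1 + i) (k + 1 + j) else 1) := by
  have hg : ∀ i j, 0 ≤ (if 1 ≤ i ∧ i + 2 ≤ j then f i j else 1) ∧
      (if 1 ≤ i ∧ i + 2 ≤ j then f i j else 1) ≤ 1 := by
    intro i j
    split_ifs
    · exact h i j
    · norm_num
  have hg' : ∀ i j, 0 ≤ (if 1 ≤ i ∧ i + 2 ≤ j then f (k + 1 + i) (k + 1 + j) else 1) ∧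
      (if 1 ≤ i ∧ i + 2 ≤ j then f (k + 1 + i) (k + 1 + j) else 1) ≤ 1 := by
    intro i j
    split_ifs
    · exact h _ _
    · norm_num
  have e1 : 2 * k + 1 + 2 = (k + 1) + (k + 2) := by ring
  have e2 : (∏ i ∈ Finset.range (k + 2), ∏ j ∈ Finset.range (k + 2),
      if 1 ≤ i ∧ i + 2 ≤ j then f i j else 1) =
      ∏ i ∈ Finset.range (k + 1), ∏ j ∈ Finset.range (k + 2),
      if 1 ≤ i ∧ i + 2 ≤ j then f i j else 1 := by
    rw [Finset.prod_range_succ]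
    rw [Finset.prod_eq_one (s := Finset.range (k + 2))
      (f := fun j => if 1 ≤ k + 1 ∧ k + 1 + 2 ≤ j then f (k + 1) j else 1), mul_one]
    intro j hj
    rw [Finset.mem_range] at hj
    rw [if_neg (by omega)]
  rw [e2, e1, Finset.prod_range_add]
  refine mul_le_mul ?_ ?_ ?_ ?_
  · refine Finset.prod_le_prod (fun i _ => aux_prod_nonneg _ _ (hg i)) (fun i _ => ?_)
    rw [show (k + 1) + (k + 2) = (k + 2) + (k + 1) by ring, Finset.prod_range_add]
    exact mul_le_of_le_one_right (aux_prod_nonneg _ _ (hg i))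
      (aux_prod_le_one _ _ (fun j => hg i (k + 2 + j)))
  · refine Finset.prod_le_prod (fun i _ => aux_prod_nonneg _ _ (hg _)) (fun i _ => ?_)
    rw [Finset.prod_range_add]
    refine (mul_le_of_le_one_left (aux_prod_nonneg _ _ (fun j => hg _ (k + 1 + j)))
      (aux_prod_le_one _ _ (hg _))).trans ?_
    refine Finset.prod_le_prod (fun j _ => (hg _ _).1) (fun j _ => ?_)
    by_cases hc : 1 ≤ i ∧ i + 2 ≤ j
    · rw [if_pos hc, if_pos (by omega)]
    · rw [if_neg hc]
      exact (hg _ _).2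
  · exact Finset.prod_nonneg (fun i _ => aux_prod_nonneg _ _ (hg _))
  · exact Finset.prod_nonneg (fun i _ => aux_prod_nonneg _ _ (hg _))

theorem aux_path_eq {d : ℕ} {M : Type*} (φ : (Fin d → ℝ) → M → M → ℝ)
    (k : ℕ) (p q : M) (y : Fin (k + 1) → (Fin d → ℝ)) (m : Fin k → M)
    (X : ℕ → (Fin d → ℝ)) (P : ℕ → M) (c : Fin d → ℝ)
    (hX : ∀ i : Fin (k + 2), pts y i = X i - c) (hP : ∀ i : Fin (k + 2), mks p q m i = P i) :
    pathProd φ k p q y m =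
      ∏ i ∈ Finset.range (k + 1), φ (X (i + 1) - X i) (P i) (P (i + 1)) := by
  unfold pathProd
  rw [Finset.prod_range]
  refine Finset.prod_congr rfl (fun i _ => ?_)
  rw [hX, hX, hP, hP, sub_sub_sub_cancel_right]
  simp

theorem aux_avoid_eq {d : ℕ} {M : Type*} (φ : (Fin d → ℝ) → M → M → ℝ)
    (k : ℕ) (p q : M) (y : Fin (k + 1) → (Fin d → ℝ)) (m : Fin k → M)
    (X : ℕ → (Fin d → ℝ)) (P : ℕ → M) (c : Fin d → ℝ)
    (hX : ∀ i : Fin (k + 2), pts y i = X i - c) (hP : ∀ i : Fin (k + 2), mks p q m i = P i) :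
    avoidProd φ k p q y m =
      ∏ i ∈ Finset.range (k + 2), ∏ j ∈ Finset.range (k + 2),
        if 1 ≤ i ∧ i + 2 ≤ j then 1 - φ (X j - X i) (P i) (P j) else 1 := by
  unfold avoidProd
  rw [Finset.prod_range]
  refine Finset.prod_congr rfl (fun i _ => ?_)
  rw [Finset.prod_range]
  refine Finset.prod_congr rfl (fun j _ => ?_)
  rw [hX, hX, hP, hP, sub_sub_sub_cancel_right]

/-- concatenation -/
def cat {A : Type*} {a b c : ℕ} (h : a + b = c) (u : Fin a → A) (v : Fin b → A) : Fin c → A :=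
  fun i => Sum.elim u v ((finSumFinEquiv.trans (finCongr h)).symm i)

theorem cat_left {A : Type*} {a b c : ℕ} (h : a + b = c) (u : Fin a → A) (v : Fin b → A)
    (i : ℕ) (hi : i < a) (hc : i < c) : cat h u v ⟨i, hc⟩ = u ⟨i, hi⟩ := by
  have : (finSumFinEquiv.trans (finCongr h)).symm ⟨i, hc⟩ = Sum.inl ⟨i, hi⟩ := by
    rw [Equiv.symm_apply_eq]; ext; simp
  simp only [cat, this, Sum.elim_inl]

theorem cat_right {A : Type*} {a b c : ℕ} (h : a + b = c) (u : Fin a → A) (v : Fin b → A)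
    (i : ℕ) (hi : i < b) (hc : a + i < c) : cat h u v ⟨a + i, hc⟩ = v ⟨i, hi⟩ := by
  have : (finSumFinEquiv.trans (finCongr h)).symm ⟨a + i, hc⟩ = Sum.inr ⟨i, hi⟩ := by
    rw [Equiv.symm_apply_eq]; ext; simp
  simp only [cat, this, Sum.elim_inr]

theorem cat_measurable {A : Type*} [MeasurableSpace A] {a b c : ℕ} (h : a + b = c) :
    Measurable (fun z : (Fin a → A) × (Fin b → A) => cat h z.1 z.2) := by
  refine measurable_pi_lambda _ (fun i => ?_)
  unfold cat
  rcases (finSumFinEquiv.trans (finCongr h)).symm i with j | j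
  · simp only [Sum.elim_inl]; fun_prop
  · simp only [Sum.elim_inr]; fun_prop

theorem cat_mp {A : Type*} [MeasurableSpace A] (μ : Measure A) [SigmaFinite μ]
    {a b c : ℕ} (h : a + b = c) :
    MeasurePreserving (fun z : (Fin a → A) × (Fin b → A) => cat h z.1 z.2)
      ((Measure.pi fun _ => μ).prod (Measure.pi fun _ => μ)) (Measure.pi fun _ => μ) := by
  have h1 := measurePreserving_sumPiEquivProdPi_symm (fun _ : Fin a ⊕ Fin b => μ)
  have h2 := measurePreserving_piCongrLeft (fun _ : Fin c => μ)
    (finSumFinEquiv.trans (finCongr h))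
  have h3 := h2.comp h1
  convert h3 using 1
  funext z i
  obtain ⟨j, rfl⟩ := (finSumFinEquiv.trans (finCongr h)).surjective i
  simp only [cat, Function.comp, Equiv.symm_apply_apply]
  rw [MeasurableEquiv.coe_piCongrLeft, Equiv.piCongrLeft_apply_apply]
  rcases j with j | j <;> rfl

theorem cat_lintegral {A : Type*} [MeasurableSpace A] (μ : Measure A) [SigmaFinite μ]
    {a b c : ℕ} (h : a + b = c) (f : (Fin c → A) → ℝ≥0∞) (hf : Measurable f) :
    ∫⁻ x, f x ∂(Measure.pi fun _ => μ) =
      ∫⁻ u, ∫⁻ v, f (cat h u v) ∂(Measure.pi fun _ => μ) ∂(Measure.pi fun _ => μ) := by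
  rw [← (cat_mp μ h).lintegral_comp hf, lintegral_prod]
  exact (hf.comp (cat_measurable h)).aemeasurable

theorem cons_lintegral {A : Type*} [MeasurableSpace A] (μ : Measure A) [SigmaFinite μ]
    {a : ℕ} (f : (Fin (a + 1) → A) → ℝ≥0∞) (hf : Measurable f) :
    ∫⁻ x, f x ∂(Measure.pi fun _ => μ) =
      ∫⁻ r, ∫⁻ v, f (Fin.cons r v) ∂(Measure.pi fun _ => μ) ∂μ := by
  have h := (measurePreserving_piFinSuccAbove (fun _ : Fin (a + 1) => μ) 0).symm
  rw [← h.lintegral_comp hf, lintegral_prod]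
  · refine lintegral_congr fun r => lintegral_congr fun v => ?_
    congr 1
    simp [MeasurableEquiv.piFinSuccAbove, Fin.insertNthEquiv]
  · exact (hf.comp h.measurable).aemeasurable

theorem mks_zero {M : Type*} {k : ℕ} (p q : M) (m : Fin k → M) (h : 0 < k + 2) :
    mks p q m ⟨0, h⟩ = p := rfl

theorem mks_mid {M : Type*} {k : ℕ} (p q : M) (m : Fin k → M) (i : ℕ) (hi : i < k)
    (h : i + 1 < k + 2) : mks p q m ⟨i + 1, h⟩ = m ⟨i, hi⟩ := by
  have : (⟨i + 1, h⟩ : Fin (k + 2)) = (Fin.castSucc ⟨i, hi⟩).succ := rfl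
  rw [this, mks, Fin.cons_succ, Fin.snoc_castSucc]

theorem mks_last {M : Type*} {k : ℕ} (p q : M) (m : Fin k → M) (h : k + 1 < k + 2) :
    mks p q m ⟨k + 1, h⟩ = q := by
  have : (⟨k + 1, h⟩ : Fin (k + 2)) = (Fin.last k).succ := rfl
  rw [this, mks, Fin.cons_succ, Fin.snoc_last]

theorem pts_zero {d k : ℕ} (y : Fin (k + 1) → (Fin d → ℝ)) (h : 0 < k + 2) :
    pts y ⟨0, h⟩ = 0 := rfl

theorem pts_succ {d k : ℕ} (y : Fin (k + 1) → (Fin d → ℝ)) (i : ℕ) (h : i + 1 < k + 2) :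
    pts y ⟨i + 1, h⟩ = y ⟨i, by omega⟩ := rfl

theorem aux_pointwise {d : ℕ} {M : Type*} (φ : (Fin d → ℝ) → M → M → ℝ)
    (h01 : ∀ x p q, φ x p q ∈ Set.Icc (0 : ℝ) 1) (k : ℕ) (p q r : M)
    (hc1 : (k + 1) + (k + 1) = 2 * k + 1 + 1) (hc2 : k + (k + 1) = 2 * k + 1)
    (y1 y2 : Fin (k + 1) → (Fin d → ℝ)) (m1 m2 : Fin k → M) :
    pathProd φ (2 * k + 1) p q (cat hc1 y1 ((fun _ => y1 (Fin.last k)) + y2))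
        (cat hc2 m1 (Fin.cons r m2)) *
      avoidProd φ (2 * k + 1) p q (cat hc1 y1 ((fun _ => y1 (Fin.last k)) + y2))
        (cat hc2 m1 (Fin.cons r m2)) ≤
    (pathProd φ k p r y1 m1 * avoidProd φ k p r y1 m1) *
      (pathProd φ k r q y2 m2 * avoidProd φ k r q y2 m2) := by
  set Y := cat hc1 y1 ((fun _ => y1 (Fin.last k)) + y2) with hY
  set m := cat hc2 m1 (Fin.cons r m2) with hm
  let X : ℕ → (Fin d → ℝ) := fun i => if h : i < 2 * k + 1 + 2 then pts Y ⟨i, h⟩ else 0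
  let P : ℕ → M := fun i => if h : i < 2 * k + 1 + 2 then mks p q m ⟨i, h⟩ else p
  have hX : ∀ i : Fin (2 * k + 1 + 2), pts Y i = X i - 0 := by
    intro i; simp [X]
  have hP : ∀ i : Fin (2 * k + 1 + 2), mks p q m i = P i := by
    intro i; simp [P]
  have hX1 : ∀ i : Fin (k + 2), pts y1 i = X i - 0 := by
    rintro ⟨i, hi⟩
    simp only [X, sub_zero]
    rw [dif_pos (by omega)]
    rcases i with _ | i
    · rfl
    · rw [pts_succ, pts_succ, hY, cat_left]
  have hXk : X (k + 1) = y1 (Fin.last k) := by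
    have := hX1 (Fin.last (k + 1))
    rw [sub_zero] at this
    exact this.symm
  have hX2 : ∀ i : Fin (k + 2), pts y2 i = X (k + 1 + i) - X (k + 1) := by
    rintro ⟨i, hi⟩
    rcases i with _ | i
    · rw [pts_zero]
      simp
    · rw [hXk]
      simp only [X]
      rw [dif_pos (by omega), pts_succ]
      have : pts Y ⟨k + 1 + (i + 1), by omega⟩ = Y ⟨k + 1 + i, by omega⟩ := rfl
      rw [this, hY, cat_right _ _ _ _ (by omega)]
      simp
  have hP1 : ∀ i : Fin (k + 2), mks p r m1 i = P i := by
    rintro ⟨i, hi⟩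
    simp only [P]
    rw [dif_pos (by omega)]
    rcases i with _ | i
    · rfl
    · rw [mks_mid p q m i (by omega)]
      by_cases h : i < k
      · rw [mks_mid _ _ _ _ h, hm, cat_left]
      · obtain rfl : i = k := by omega
        rw [mks_last, hm]
        exact (cat_right hc2 m1 (Fin.cons r m2) 0 (by omega) (by omega)).symm
  have hP2 : ∀ i : Fin (k + 2), mks r q m2 i = P (k + 1 + i) := by
    rintro ⟨i, hi⟩
    simp only [P]
    rw [dif_pos (by omega)]
    have e : (⟨k + 1 + i, by omega⟩ : Fin (2 * k + 1 + 2)) = ⟨k + i + 1, by omega⟩ := by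
      ext; simp; omega
    rw [e]
    by_cases h : i < k + 1
    · rw [mks_mid _ _ _ _ (by omega : k + i < 2 * k + 1), hm, cat_right _ _ _ _ h]
      rcases i with _ | i
      · rfl
      · rw [mks_mid _ _ _ _ (by omega)]
        rfl
    · obtain rfl : i = k + 1 := by omega
      rw [mks_last]
      have e : (⟨k + (k + 1) + 1, by omega⟩ : Fin (2 * k + 1 + 2)) =
          ⟨2 * k + 1 + 1, by omega⟩ := by
        ext; simp; omega
      rw [e, mks_last]
  rw [aux_path_eq φ _ p q Y m X P 0 hX hP, aux_avoid_eq φ _ p q Y m X P 0 hX hP,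
    aux_path_eq φ _ p r y1 m1 X P 0 hX1 hP1, aux_avoid_eq φ _ p r y1 m1 X P 0 hX1 hP1,
    aux_path_eq φ _ r q y2 m2 (fun i => X (k + 1 + i)) (fun i => P (k + 1 + i)) _ hX2 hP2,
    aux_avoid_eq φ _ r q y2 m2 (fun i => X (k + 1 + i)) (fun i => P (k + 1 + i)) _ hX2 hP2]
  have hav := aux_avoid k (fun i j => 1 - φ (X j - X i) (P i) (P j)) (fun i j => by
    have := h01 (X j - X i) (P i) (P j)
    exact ⟨by linarith [this.2], by linarith [this.1]⟩)
  rw [← hc1, Finset.prod_range_add, mul_mul_mul_comm]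
  refine mul_le_mul_of_nonneg_left hav ?_
  exact mul_nonneg (Finset.prod_nonneg (fun i _ => (h01 _ _ _).1))
    (Finset.prod_nonneg (fun i _ => (h01 _ _ _).1))

/-- integrand -/
noncomputable def FF {d : ℕ} {M : Type*} (φ : (Fin d → ℝ) → M → M → ℝ) (k : ℕ) (p q : M)
    (y : Fin (k + 1) → (Fin d → ℝ)) (m : Fin k → M) : ℝ≥0∞ :=
  ENNReal.ofReal (pathProd φ k p q y m * avoidProd φ k p q y m)

theorem FF_meas {d : ℕ} {M : Type*} [MeasurableSpace M]
    (φ : (Fin d → ℝ) → M → M → ℝ)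
    (hmeas : Measurable (fun z : (Fin d → ℝ) × M × M => φ z.1 z.2.1 z.2.2)) (k : ℕ)
    {Z : Type*} [MeasurableSpace Z] (p q : Z → M) (y : Z → Fin (k + 1) → (Fin d → ℝ))
    (m : Z → Fin k → M) (hp : Measurable p) (hq : Measurable q) (hy : Measurable y)
    (hm : Measurable m) : Measurable (fun z => FF φ k (p z) (q z) (y z) (m z)) := by
  have h1 : ∀ i, Measurable (fun z => pts (y z) i) := by
    intro i
    refine Fin.cases ?_ (fun i => ?_) i
    · exact measurable_const
    · exact (measurable_pi_apply i).comp hy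
  have h2 : ∀ i, Measurable (fun z => mks (p z) (q z) (m z) i) := by
    intro i
    refine Fin.cases ?_ (fun i => ?_) i
    · exact hp
    · refine Fin.lastCases ?_ (fun i => ?_) i
      · simpa [mks] using hq
      · simpa [mks, Function.comp_def] using (measurable_pi_apply i).comp hm
  have h3 : ∀ i j i' j', Measurable (fun z =>
      φ (pts (y z) i - pts (y z) j) (mks (p z) (q z) (m z) i') (mks (p z) (q z) (m z) j')) :=
    fun i j i' j' => hmeas.comp (((h1 i).sub (h1 j)).prodMk ((h2 i').prodMk (h2 j')))
  unfold FF
  refine Measurable.ennreal_ofReal (Measurable.mul ?_ ?_)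
  · unfold pathProd
    exact Finset.measurable_prod _ (fun i _ => h3 _ _ _ _)
  · unfold avoidProd
    refine Finset.measurable_prod _ (fun i _ => Finset.measurable_prod _ (fun j _ => ?_))
    split_ifs
    · exact measurable_const.sub (h3 _ _ _ _)
    · exact measurable_const


theorem aux_fubini {M Y N : Type*} [MeasurableSpace M] [MeasurableSpace Y] [MeasurableSpace N]
    (Q : Measure M) [SFinite Q] (μ : Measure Y) [SFinite μ] (ν : Measure N) [SFinite ν]
    (f g : M → Y → N → ℝ≥0∞)
    (hf : Measurable (fun z : (M × Y) × N => f z.1.1 z.1.2 z.2))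
    (hg : Measurable (fun z : (M × Y) × N => g z.1.1 z.1.2 z.2)) :
    ∫⁻ y1, ∫⁻ y2, ∫⁻ m1, ∫⁻ r, ∫⁻ m2, f r y1 m1 * g r y2 m2 ∂ν ∂Q ∂ν ∂μ ∂μ =
      ∫⁻ r, (∫⁻ y1, ∫⁻ m1, f r y1 m1 ∂ν ∂μ) * (∫⁻ y2, ∫⁻ m2, g r y2 m2 ∂ν ∂μ) ∂Q := by
  have ma1 : Measurable (fun z : M × Y => ∫⁻ m, f z.1 z.2 m ∂ν) := hf.lintegral_prod_right'
  have ma2 : Measurable (fun z : M × Y => ∫⁻ m, g z.1 z.2 m ∂ν) := hg.lintegral_prod_right'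
  have e1 : ∀ y1 y2, ∫⁻ m1, ∫⁻ r, ∫⁻ m2, f r y1 m1 * g r y2 m2 ∂ν ∂Q ∂ν =
      ∫⁻ r, (∫⁻ m, f r y1 m ∂ν) * (∫⁻ m, g r y2 m ∂ν) ∂Q := by
    intro y1 y2
    have e : ∀ m1 r, ∫⁻ m2, f r y1 m1 * g r y2 m2 ∂ν = f r y1 m1 * ∫⁻ m, g r y2 m ∂ν :=
      fun m1 r => lintegral_const_mul _
        (hg.comp ((measurable_const (a := (r, y2))).prodMk measurable_id))
    simp only [e]
    rw [lintegral_lintegral_swap]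
    · refine lintegral_congr fun r => ?_
      exact lintegral_mul_const _
        (hf.comp ((measurable_const (a := (r, y1))).prodMk measurable_id))
    · refine Measurable.aemeasurable (Measurable.mul ?_ ?_)
      · exact hf.comp ((measurable_snd.prodMk (measurable_const (a := y1))).prodMk measurable_fst)
      · exact ma2.comp (measurable_snd.prodMk (measurable_const (a := y2)))
  simp only [e1]
  generalize ha : (fun r y => ∫⁻ m, f r y m ∂ν) = a1
  generalize hb : (fun r y => ∫⁻ m, g r y m ∂ν) = a2
  have ea : ∀ r y, ∫⁻ m, f r y m ∂ν = a1 r y := fun r y => by rw [← ha]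
  have eb : ∀ r y, ∫⁻ m, g r y m ∂ν = a2 r y := fun r y => by rw [← hb]
  simp only [ea, eb] at ma1 ma2 ⊢
  have md2 : Measurable (fun r => ∫⁻ y, a2 r y ∂μ) := ma2.lintegral_prod_right'
  have e2 : ∀ y1, ∫⁻ y2, ∫⁻ r, a1 r y1 * a2 r y2 ∂Q ∂μ =
      ∫⁻ r, a1 r y1 * (∫⁻ y2, a2 r y2 ∂μ) ∂Q := by
    intro y1
    rw [lintegral_lintegral_swap]
    · refine lintegral_congr fun r => ?_
      exact lintegral_const_mul _ (ma2.comp ((measurable_const (a := r)).prodMk measurable_id))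
    · refine Measurable.aemeasurable (Measurable.mul ?_ ?_)
      · exact ma1.comp (measurable_snd.prodMk (measurable_const (a := y1)))
      · exact ma2.comp (measurable_snd.prodMk measurable_fst)
  simp only [e2]
  rw [lintegral_lintegral_swap]
  · refine lintegral_congr fun r => ?_
    exact lintegral_mul_const _ (ma1.comp ((measurable_const (a := r)).prodMk measurable_id))
  · refine Measurable.aemeasurable (Measurable.mul ?_ ?_)
    · exact ma1.comp (measurable_snd.prodMk measurable_fst)
    · exact md2.comp measurable_snd

set_option maxHeartbeats 400000 in
/-- Submultiplicativity of the self-avoiding-walk kernel: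
`d^{[2n]}(p,q) ≤ ∫ d^{[n]}(p,r) d^{[n]}(r,q) Q(dr)` for every `n ≥ 1` (here `n = k+1`,
so `d^{[n]} = dSAW Q φ k` and `d^{[2n]} = dSAW Q φ (2k+1)`). -/
theorem stmt7 {d : ℕ} (hd : 1 ≤ d) {M : Type*} [MeasurableSpace M]
    (Q : Measure M) [IsProbabilityMeasure Q]
    (φ : (Fin d → ℝ) → M → M → ℝ)
    (hmeas : Measurable (fun z : (Fin d → ℝ) × M × M => φ z.1 z.2.1 z.2.2))
    (h01 : ∀ x p q, φ x p q ∈ Set.Icc (0 : ℝ) 1)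
    (hsym : ∀ x p q, φ x p q = φ (-x) q p)
    (k : ℕ) (p q : M) :
    dSAW Q φ (2 * k + 1) p q ≤ ∫⁻ r, dSAW Q φ k p r * dSAW Q φ k r q ∂Q := by
  have hc1 : (k + 1) + (k + 1) = 2 * k + 1 + 1 := by ring
  have hc2 : k + (k + 1) = 2 * k + 1 := by ring
  have hL : dSAW Q φ (2 * k + 1) p q = ∫⁻ y1 : Fin (k + 1) → (Fin d → ℝ),
      ∫⁻ y2 : Fin (k + 1) → (Fin d → ℝ), ∫⁻ m1, ∫⁻ r, ∫⁻ m2,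
        FF φ (2 * k + 1) p q (cat hc1 y1 ((fun _ => y1 (Fin.last k)) + y2))
          (cat hc2 m1 (Fin.cons r m2))
        ∂(Measure.pi fun _ => Q) ∂Q ∂(Measure.pi fun _ => Q) := by
    have hb : Measurable (fun y : Fin (2 * k + 1 + 1) → (Fin d → ℝ) =>
        ∫⁻ m, FF φ (2 * k + 1) p q y m ∂(Measure.pi fun _ => Q)) :=
      Measurable.lintegral_prod_right' (f := fun z : (Fin (2 * k + 1 + 1) → (Fin d → ℝ)) ×
        (Fin (2 * k + 1) → M) => FF φ (2 * k + 1) p q z.1 z.2)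
        (FF_meas φ hmeas _ _ _ _ _ (by fun_prop) (by fun_prop) (by fun_prop) (by fun_prop))
    have h1 := cat_lintegral (volume : Measure (Fin d → ℝ)) hc1 _ hb
    refine h1.trans ?_
    refine lintegral_congr (fun y1 => ?_)
    have h2 := lintegral_add_left_eq_self (μ := (volume : Measure (Fin (k + 1) → (Fin d → ℝ))))
      (fun y2 => ∫⁻ m, FF φ (2 * k + 1) p q (cat hc1 y1 y2) m ∂(Measure.pi fun _ => Q))
      (fun _ => y1 (Fin.last k))
    refine h2.symm.trans ?_
    refine lintegral_congr (fun y2 => ?_)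
    rw [cat_lintegral Q hc2 _
      (FF_meas φ hmeas _ _ _ _ _ (by fun_prop) (by fun_prop) (by fun_prop) (by fun_prop))]
    refine lintegral_congr (fun m1 => ?_)
    refine cons_lintegral Q _ ?_
    exact FF_meas φ hmeas _ _ _ _ _ (by fun_prop) (by fun_prop) (by fun_prop)
      ((cat_measurable hc2).comp (measurable_const.prodMk measurable_id))
  rw [hL]
  calc _ ≤ ∫⁻ y1 : Fin (k + 1) → (Fin d → ℝ),
      ∫⁻ y2 : Fin (k + 1) → (Fin d → ℝ), ∫⁻ m1, ∫⁻ r, ∫⁻ m2,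
        FF φ k p r y1 m1 * FF φ k r q y2 m2
        ∂(Measure.pi fun _ => Q) ∂Q ∂(Measure.pi fun _ => Q) := by
        refine lintegral_mono fun y1 => lintegral_mono fun y2 => lintegral_mono fun m1 =>
          lintegral_mono fun r => lintegral_mono fun m2 => ?_
        unfold FF
        rw [← ENNReal.ofReal_mul]
        · exact ENNReal.ofReal_le_ofReal (aux_pointwise φ h01 k p q r hc1 hc2 y1 y2 m1 m2)
        · refine mul_nonneg (Finset.prod_nonneg fun i _ => (h01 _ _ _).1)
            (Finset.prod_nonneg fun i _ => Finset.prod_nonneg fun j _ => ?_)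
          split_ifs
          · exact sub_nonneg.2 (h01 _ _ _).2
          · exact zero_le_one
    _ = ∫⁻ r, dSAW Q φ k p r * dSAW Q φ k r q ∂Q := by
        refine aux_fubini Q volume (Measure.pi fun _ => Q) (fun r y m => FF φ k p r y m) (fun r y m => FF φ k r q y m) ?_ ?_
        · exact FF_meas φ hmeas k (fun _ : (M × (Fin (k + 1) → (Fin d → ℝ))) × (Fin k → M) => p) (fun z => z.1.1) (fun z => z.1.2) (fun z => z.2)
            measurable_const (measurable_fst.comp measurable_fst)
            (measurable_snd.comp measurable_fst) measurable_snd
        · exact FF_meas φ hmeas k (fun z : (M × (Fin (k + 1) → (Fin d → ℝ))) × (Fin k → M) => z.1.1) (fun _ => q) (fun z => z.1.2) (fun z => z.2)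
            (measurable_fst.comp measurable_fst) measurable_const
            (measurable_snd.comp measurable_fst) measurable_snd
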